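/- For all n ≥ 1, the long-non-final-sequence set and the descent set are equidistributed over Dyck paths of length 2n: for every S ⊆ [2n-1], |{ w ∈ D_n : LS(w) = S }| = |{ w ∈ D_n : Des(w) = S }|. -/

import Mathlib

/-!
For every `S`, the Dyck paths with `S ⊆ Des w` are in bijection with those with `S ⊆ LSset w`
(`card_LS_superset`); equality of the counts of words whose set is exactly `S` then follows by
inclusion–exclusion (`card_eq_of_card_superset`).

The bijection only changes the pairs of letters at positions `s, s + 1` with `s ∈ S`. In both
families these two letters are distinct, the pairs are disjoint, and the height before the pair
(number of `v`'s minus number of `h`'s among the first `s - 1` letters) is positive. Conversely, a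
pair of distinct letters placed at positive height keeps the path above the diagonal, whichever
order the letters come in (`isDyck_of_agree`). So the pair may be rewritten freely: `toDes` makes
each pair `hv`, and `toLS` makes each pair, from left to right, `x x̄`, where `x` is the (already
rewritten) letter preceding it. These maps are mutually inverse.
-/

open Finset

/-- The `i`-th letter (1-indexed) of a word `w`; `true` = vertical step `v`,
`false` = horizontal step `h`; junk value `false` out of range. -/
def ltr {m : ℕ} (w : Fin m → Bool) (i : ℕ) : Bool :=
  if h : 1 ≤ i ∧ i ≤ m then w ⟨i - 1, by omega⟩ else false

/-- The number of occurrences of the letter `b` among the first `i` letters of `w`. -/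
def pcnt {m : ℕ} (w : Fin m → Bool) (b : Bool) (i : ℕ) : ℕ :=
  ((Finset.Icc 1 i).filter fun j => ltr w j = b).card

/-- `w` is a Dyck path of length `2n`: `n` vertical steps and every prefix has at
least as many `v`'s as `h`'s. -/
def IsDyck (n : ℕ) (w : Fin (2 * n) → Bool) : Prop :=
  pcnt w true (2 * n) = n ∧ ∀ i ≤ 2 * n, pcnt w false i ≤ pcnt w true i

/-- The descent (valley) set of `w`: positions `i` with `w_i = h`, `w_{i+1} = v`. -/
def Des {n : ℕ} (w : Fin (2 * n) → Bool) : Finset ℕ :=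
  (Finset.Icc 1 (2 * n - 1)).filter fun i => ltr w i = false ∧ ltr w (i + 1) = true

/-- The set of long non-final sequences of `w`: positions `2 ≤ i ≤ 2n-1` with
`w_{i-1} w_i w_{i+1} = vvh` or `hhv`. -/
def LSset {n : ℕ} (w : Fin (2 * n) → Bool) : Finset ℕ :=
  (Finset.Icc 2 (2 * n - 1)).filter fun i =>
    ltr w (i - 1) = ltr w i ∧ ltr w i ≠ ltr w (i + 1)

lemma pcnt_zero {m : ℕ} (w : Fin m → Bool) (b : Bool) : pcnt w b 0 = 0 := by
  simp [pcnt]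

lemma pcnt_succ {m : ℕ} (w : Fin m → Bool) (b : Bool) (i : ℕ) :
    pcnt w b (i + 1) = pcnt w b i + if ltr w (i + 1) = b then 1 else 0 := by
  unfold pcnt
  rw [← Finset.insert_Icc_right_eq_Icc_add_one (by omega), Finset.filter_insert]
  split_ifs with h
  · rw [Finset.card_insert_of_notMem (by simp)]
  · rfl

/-- The word of length `m` whose `i`-th letter (1-indexed) is `f i`. -/
def mkWord (m : ℕ) (f : ℕ → Bool) : Fin m → Bool := fun j => f (j + 1)

lemma ltr_mkWord {m : ℕ} (f : ℕ → Bool) {i : ℕ} (h1 : 1 ≤ i) (h2 : i ≤ m) :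
    ltr (mkWord m f) i = f i := by
  have : i - 1 + 1 = i := by omega
  simp [ltr, mkWord, h1, h2, this]

lemma word_ext {m : ℕ} {u w : Fin m → Bool}
    (h : ∀ i, 1 ≤ i → i ≤ m → ltr u i = ltr w i) : u = w := by
  funext j
  have := h (j + 1) (by omega) (by omega)
  simpa [ltr, Nat.succ_le_of_lt j.2] using this

/-- If two words agree outside the pairs `{s, s + 1}`, `s ∈ S`, and each has two distinct letters
in every such pair, then their letter counts agree except possibly in the middle of a pair. -/
lemma pcnt_eq_of_agree {m : ℕ} {S : Finset ℕ} {u w : Fin m → Bool}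
    (h0 : 0 ∉ S) (hsp : ∀ s ∈ S, s + 1 ∉ S)
    (hag : ∀ i, i ∉ S → i + 1 ∉ S → ltr u (i + 1) = ltr w (i + 1))
    (hu : ∀ s ∈ S, ltr u s ≠ ltr u (s + 1)) (hw : ∀ s ∈ S, ltr w s ≠ ltr w (s + 1))
    (b : Bool) (i : ℕ) (hi : i ∉ S) : pcnt u b i = pcnt w b i := by
  induction i using Nat.strong_induction_on with
  | _ i ih =>
    rcases i with _ | i
    · simp [pcnt_zero]
    by_cases hiS : i ∈ S
    · rcases i with _ | i
      · exact absurd hiS h0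
      have hi' : i ∉ S := fun h => hsp i h hiS
      have h1 := hu _ hiS
      have h2 := hw _ hiS
      have := ih i (by omega) hi'
      simp only [pcnt_succ, this]
      revert h1 h2
      generalize ltr u (i + 1) = a
      generalize ltr u (i + 1 + 1) = c
      generalize ltr w (i + 1) = d
      generalize ltr w (i + 1 + 1) = e
      cases a <;> cases b <;> cases c <;> cases d <;> cases e <;> simp
    · rw [pcnt_succ, pcnt_succ, ih i (by omega) hiS, hag i hiS hi]

/-- Rewriting pairs of distinct letters that start at positive height preserves Dyck paths. -/
lemma isDyck_of_agree {n : ℕ} {S : Finset ℕ} {u w : Fin (2 * n) → Bool}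
    (hS : ∀ s ∈ S, 2 ≤ s ∧ s ≤ 2 * n - 1) (hsp : ∀ s ∈ S, s + 1 ∉ S)
    (hag : ∀ i, i ∉ S → i + 1 ∉ S → ltr u (i + 1) = ltr w (i + 1))
    (hu : ∀ s ∈ S, ltr u s ≠ ltr u (s + 1)) (hw : ∀ s ∈ S, ltr w s ≠ ltr w (s + 1))
    (hpos : ∀ s, s + 1 ∈ S → pcnt w false s < pcnt w true s)
    (hD : IsDyck n w) : IsDyck n u := by
  have h0 : 0 ∉ S := fun h => by have := hS 0 h; omega
  have key := pcnt_eq_of_agree h0 hsp hag hu hw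
  refine ⟨?_, fun i hi => ?_⟩
  · rw [key _ _ fun h => by have := hS _ h; omega]
    exact hD.1
  · by_cases hiS : i ∈ S
    · rcases i with _ | i
      · exact absurd hiS h0
      have hi' : i ∉ S := fun h => hsp i h hiS
      have := hpos i hiS
      rw [pcnt_succ, pcnt_succ, key _ _ hi', key _ _ hi']
      split_ifs <;> omega
    · rw [key _ _ hiS, key _ _ hiS]
      exact hD.2 i hi

lemma mem_Des {n : ℕ} {w : Fin (2 * n) → Bool} {i : ℕ} :
    i ∈ Des w ↔ (1 ≤ i ∧ i ≤ 2 * n - 1) ∧ ltr w i = false ∧ ltr w (i + 1) = true := by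
  simp [Des]

lemma mem_LSset {n : ℕ} {w : Fin (2 * n) → Bool} {i : ℕ} :
    i ∈ LSset w ↔
      (2 ≤ i ∧ i ≤ 2 * n - 1) ∧ ltr w (i - 1) = ltr w i ∧ ltr w i ≠ ltr w (i + 1) := by
  simp [LSset]

lemma pos_of_mem_Des {n : ℕ} {w : Fin (2 * n) → Bool} (hD : IsDyck n w) {s : ℕ}
    (hs : s + 1 ∈ Des w) : pcnt w false s < pcnt w true s := by
  rw [mem_Des] at hs
  have := hD.2 (s + 1) (by omega)
  rw [pcnt_succ, pcnt_succ, hs.2.1] at this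
  simp at this
  omega

lemma two_le_of_mem_Des {n : ℕ} {w : Fin (2 * n) → Bool} (hD : IsDyck n w) {s : ℕ}
    (hs : s ∈ Des w) : 2 ≤ s := by
  by_contra h
  have h1 : s = 0 + 1 := by have := (mem_Des.1 hs).1; omega
  subst h1
  have := pos_of_mem_Des hD hs
  simp [pcnt_zero] at this

lemma pos_of_mem_LSset {n : ℕ} {w : Fin (2 * n) → Bool} (hD : IsDyck n w) {s : ℕ}
    (hs : s + 1 ∈ LSset w) : pcnt w false s < pcnt w true s := by
  rw [mem_LSset] at hs
  obtain ⟨hr, h1, -⟩ := hs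
  rcases s with _ | s
  · omega
  simp only [Nat.add_sub_cancel] at h1
  -- After `h h` the height is still nonnegative; after `v` it has just been raised.
  cases hb : ltr w (s + 1)
  · have := hD.2 (s + 1 + 1) (by omega)
    rw [pcnt_succ w _ (s + 1), pcnt_succ w _ (s + 1), ← h1, hb] at this
    simp at this
    omega
  · have := hD.2 s (by omega)
    rw [pcnt_succ, pcnt_succ, hb]
    simp
    omega

/-- Rewrites the letters at positions `s, s + 1` as `hv`, for each `s ∈ S`. -/
def toDes {m : ℕ} (S : Finset ℕ) (w : Fin m → Bool) : Fin m → Bool :=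
  mkWord m fun i => if i ∈ S then false else if i - 1 ∈ S then true else ltr w i

/-- The letters of `toLS S w`, produced from left to right: a position in `S` repeats the previous
letter, and a position following one in `S` flips it. -/
def lsLetter {m : ℕ} (S : Finset ℕ) (w : Fin m → Bool) : ℕ → Bool
  | 0 => false
  | i + 1 =>
    if i + 1 ∈ S then lsLetter S w i
    else if i ∈ S then !lsLetter S w i else ltr w (i + 1)

/-- Rewrites the letters at positions `s, s + 1`, for each `s ∈ S` from left to right, as the
letter at `s - 1` followed by the opposite letter. -/
def toLS {m : ℕ} (S : Finset ℕ) (w : Fin m → Bool) : Fin m → Bool :=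
  mkWord m (lsLetter S w)

lemma ltr_of_lt {m : ℕ} (w : Fin m → Bool) {i : ℕ} (h : m < i) : ltr w i = false := by
  simp [ltr, h]

lemma toLS_spec {n : ℕ} {S : Finset ℕ} {w : Fin (2 * n) → Bool} (hD : IsDyck n w)
    (hS : S ⊆ Des w) : IsDyck n (toLS S w) ∧ S ⊆ LSset (toLS S w) := by
  have hr : ∀ s ∈ S, 2 ≤ s ∧ s ≤ 2 * n - 1 := fun s hs =>
    ⟨two_le_of_mem_Des hD (hS hs), (mem_Des.1 (hS hs)).1.2⟩
  have hsp : ∀ s ∈ S, s + 1 ∉ S := fun s hs hs' => by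
    have h1 := (mem_Des.1 (hS hs)).2.2
    have h2 := (mem_Des.1 (hS hs')).2.1
    simp [h1] at h2
  have hne : ∀ s ∈ S, ltr (toLS S w) s ≠ ltr (toLS S w) (s + 1) := fun s hs => by
    have := hr s hs
    rw [toLS, ltr_mkWord _ (by omega) (by omega), ltr_mkWord _ (by omega) (by omega)]
    simp [lsLetter, hsp s hs, hs]
  refine ⟨isDyck_of_agree hr hsp (fun i hi hi' => ?_) hne (fun s hs => ?_)
    (fun s hs => pos_of_mem_Des hD (hS hs)) hD, fun s hs => ?_⟩
  · by_cases h : i + 1 ≤ 2 * n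
    · rw [toLS, ltr_mkWord _ (by omega) h]
      simp [lsLetter, hi, hi']
    · rw [ltr_of_lt _ (by omega), ltr_of_lt _ (by omega)]
  · have := mem_Des.1 (hS hs)
    simp [this.2.1, this.2.2]
  · have := hr s hs
    refine mem_LSset.2 ⟨this, ?_, hne s hs⟩
    obtain ⟨t, rfl⟩ : ∃ t, s = t + 1 := ⟨s - 1, by omega⟩
    rw [toLS, ltr_mkWord _ (by omega) (by omega), ltr_mkWord _ (by omega) (by omega)]
    simp [lsLetter, hs]

lemma sparse_of_subset_LSset {n : ℕ} {S : Finset ℕ} {w : Fin (2 * n) → Bool}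
    (hS : S ⊆ LSset w) : ∀ s ∈ S, s + 1 ∉ S := fun _ hs hs' =>
  (mem_LSset.1 (hS hs)).2.2 (mem_LSset.1 (hS hs')).2.1

lemma toDes_spec {n : ℕ} {S : Finset ℕ} {w : Fin (2 * n) → Bool} (hD : IsDyck n w)
    (hS : S ⊆ LSset w) : IsDyck n (toDes S w) ∧ S ⊆ Des (toDes S w) := by
  have hr : ∀ s ∈ S, 2 ≤ s ∧ s ≤ 2 * n - 1 := fun s hs => (mem_LSset.1 (hS hs)).1
  have hsp := sparse_of_subset_LSset hS
  have hl : ∀ s ∈ S, ltr (toDes S w) s = false ∧ ltr (toDes S w) (s + 1) = true :=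
    fun s hs => by
      have := hr s hs
      rw [toDes, ltr_mkWord _ (by omega) (by omega), ltr_mkWord _ (by omega) (by omega)]
      simp [hsp s hs, hs]
  refine ⟨isDyck_of_agree hr hsp (fun i hi hi' => ?_) (fun s hs => ?_)
    (fun s hs => (mem_LSset.1 (hS hs)).2.2) (fun s hs => pos_of_mem_LSset hD (hS hs)) hD,
    fun s hs => ?_⟩
  · by_cases h : i + 1 ≤ 2 * n
    · rw [toDes, ltr_mkWord _ (by omega) h]
      simp [hi, hi']
    · rw [ltr_of_lt _ (by omega), ltr_of_lt _ (by omega)]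
  · simp [(hl s hs).1, (hl s hs).2]
  · have := hr s hs
    exact mem_Des.2 ⟨by omega, hl s hs⟩

lemma toDes_toLS {n : ℕ} {S : Finset ℕ} {w : Fin (2 * n) → Bool}
    (hS : S ⊆ Des w) : toDes S (toLS S w) = w := by
  refine word_ext fun i h1 h2 => ?_
  obtain ⟨i, rfl⟩ : ∃ t, i = t + 1 := ⟨i - 1, by omega⟩
  rw [toDes, ltr_mkWord _ h1 h2, toLS, ltr_mkWord _ h1 h2]
  simp only [Nat.add_sub_cancel]
  split_ifs with hi hi'
  · exact (mem_Des.1 (hS hi)).2.1.symm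
  · exact (mem_Des.1 (hS hi')).2.2.symm
  · simp [lsLetter, hi, hi']

lemma toLS_toDes {n : ℕ} {S : Finset ℕ} {w : Fin (2 * n) → Bool}
    (hS : S ⊆ LSset w) : toLS S (toDes S w) = w := by
  have key : ∀ i, i ≤ 2 * n → lsLetter S (toDes S w) i = ltr w i := by
    intro i
    induction i with
    | zero => simp [lsLetter, ltr]
    | succ i ih =>
      intro h
      rw [lsLetter, ih (by omega)]
      split_ifs with hi hi'
      · exact (mem_LSset.1 (hS hi)).2.1
      · have := (mem_LSset.1 (hS hi')).2.2
        revert this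
        cases ltr w i <;> cases ltr w (i + 1) <;> simp
      · rw [toDes, ltr_mkWord _ (by omega) h]
        simp [hi, hi']
  exact word_ext fun i h1 h2 => by rw [toLS, ltr_mkWord _ h1 h2, key i h2]

open Classical in
/-- The superset counts agree, by the bijection `toDes` with inverse `toLS`. -/
lemma card_LS_superset (n : ℕ) (S : Finset ℕ) :
    #{w : Fin (2 * n) → Bool | IsDyck n w ∧ S ⊆ LSset w} =
      #{w : Fin (2 * n) → Bool | IsDyck n w ∧ S ⊆ Des w} := by
  refine Finset.card_nbij' (toDes S) (toLS S) ?_ ?_ ?_ ?_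
  · intro w hw
    simp only [coe_filter, mem_univ, true_and, Set.mem_ofPred_eq] at hw ⊢
    exact toDes_spec hw.1 hw.2
  · intro w hw
    simp only [coe_filter, mem_univ, true_and, Set.mem_ofPred_eq] at hw ⊢
    exact toLS_spec hw.1 hw.2
  · intro w hw
    simp only [coe_filter, mem_univ, true_and, Set.mem_ofPred_eq] at hw
    exact toLS_toDes hw.2
  · intro w hw
    simp only [coe_filter, mem_univ, true_and, Set.mem_ofPred_eq] at hw
    exact toDes_toLS hw.2

/-- The words with `F w ⊇ S` are those with `F w = S` together with those having `F w = T` for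
some `T ⊋ S`. -/
lemma card_superset_eq {α : Type*} (A : Finset α) (U S : Finset ℕ) (F : α → Finset ℕ)
    (hF : ∀ a, F a ⊆ U) :
    #{a ∈ A | S ⊆ F a} = #{a ∈ A | F a = S} + ∑ T ∈ U.powerset with S ⊂ T, #{a ∈ A | F a = T} := by
  classical
  have h1 : {a ∈ A | S ⊆ F a} = {a ∈ A | F a = S} ∪ {a ∈ A | S ⊂ F a} := by
    ext a
    simp only [mem_filter, mem_union, ← and_or_left, subset_iff_ssubset_or_eq, eq_comm, or_comm]
  rw [h1, card_union_of_disjoint]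
  · congr 1
    rw [card_eq_sum_card_fiberwise (f := F) (t := {T ∈ U.powerset | S ⊂ T})]
    · refine sum_congr rfl fun T hT => ?_
      rw [filter_filter]
      congr 1
      refine filter_congr fun a _ => ?_
      have := (mem_filter.1 hT).2
      constructor
      · exact fun h => h.2
      · rintro rfl
        exact ⟨this, rfl⟩
    · intro a ha
      simp only [coe_filter, Set.mem_ofPred_eq, mem_powerset] at ha ⊢
      exact ⟨hF a, ha.2⟩
  · rw [disjoint_filter]
    rintro a - rfl h
    exact h.ne rfl

/-- Inclusion–exclusion, by downward induction on `S`: set-valued statistics with the same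
superset counts are equidistributed. -/
lemma card_eq_of_card_superset {α : Type*} (A : Finset α) (U : Finset ℕ) (F G : α → Finset ℕ)
    (hF : ∀ a, F a ⊆ U) (hG : ∀ a, G a ⊆ U)
    (h : ∀ S, #{a ∈ A | S ⊆ F a} = #{a ∈ A | S ⊆ G a}) (S : Finset ℕ) (hS : S ⊆ U) :
    #{a ∈ A | F a = S} = #{a ∈ A | G a = S} := by
  classical
  induction hk : #(U \ S) using Nat.strong_induction_on generalizing S with
  | _ k ih =>
    have hs := h S
    rw [card_superset_eq A U S F hF, card_superset_eq A U S G hG] at hs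
    have : ∑ T ∈ U.powerset with S ⊂ T, #{a ∈ A | F a = T} =
        ∑ T ∈ U.powerset with S ⊂ T, #{a ∈ A | G a = T} := by
      refine sum_congr rfl fun T hT => ?_
      simp only [mem_filter, mem_powerset] at hT
      refine ih _ ?_ T hT.1 rfl
      rw [← hk, card_sdiff_of_subset hT.1, card_sdiff_of_subset hS]
      have h1 := card_lt_card hT.2
      have h2 := card_le_card hT.1
      omega
    omega

/-- For `n ≥ 1`, the long-non-final-sequence set and the descent set are
equidistributed over Dyck paths of length `2n`. -/
theorem LS_equidistributed_with_Des (n : ℕ) (hn : 1 ≤ n)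
    (S : Finset ℕ) (hS : S ⊆ Finset.Icc 1 (2 * n - 1)) :
    Nat.card {w : Fin (2 * n) → Bool // IsDyck n w ∧ LSset w = S} =
      Nat.card {w : Fin (2 * n) → Bool // IsDyck n w ∧ Des w = S} := by
  classical
  have := card_eq_of_card_superset ({w : Fin (2 * n) → Bool | IsDyck n w} : Finset _)
    (Finset.Icc 1 (2 * n - 1)) LSset Des
    (fun w => (filter_subset _ _).trans (Icc_subset_Icc_left (by omega)))
    (fun w => filter_subset _ _)
    (fun T => by simpa only [filter_filter] using card_LS_superset n T) S hS
  simpa only [filter_filter, Nat.card_eq_fintype_card, Fintype.card_subtype] using this
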